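/- The binary [5,3,2] code C with generator matrix rows (1,0,0,1,0), (0,1,0,1,0), (0,0,1,0,1) has second generalized Hamming weight d_2^C = 3 < (5/3)·2; hence no PIR achievable rate matrix Λ_{κ,ν} with κ/ν = 3/5 exists for C. -/

import Mathlib

/-- `I` is an information set of the `[n,k]` code `C`: it has size `k` and a codeword
vanishing on `I` is zero (so the projection of `C` onto the coordinates in `I` is a
bijection onto `F^I`). -/
def IsInfoSet {F : Type*} [Field F] {n : ℕ} (C : Submodule F (Fin n → F)) (k : ℕ)
    (I : Finset (Fin n)) : Prop :=
  I.card = k ∧ ∀ x ∈ C, (∀ j ∈ I, x j = 0) → x = 0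

/-- `Λ` is a PIR achievable rate matrix for the `[n,k]` code `C`: every column has
Hamming weight `κ` and the support of every row contains an information set. -/
def IsPIRMatrix {F : Type*} [Field F] {n ν : ℕ} (C : Submodule F (Fin n → F))
    (k κ : ℕ) (Λ : Fin ν → Fin n → Bool) : Prop :=
  (∀ j, (Finset.univ.filter fun u => Λ u j = true).card = κ) ∧
  ∀ u, ∃ I : Finset (Fin n), (∀ j ∈ I, Λ u j = true) ∧ IsInfoSet C k I

/-- The `s`-th generalized Hamming weight of the code `C`: the smallest support size of
an `s`-dimensional subcode of `C`. -/
noncomputable def genHammingWeight {F : Type*} [Field F] {n : ℕ}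
    (C : Submodule F (Fin n → F)) (s : ℕ) : ℕ :=
  sInf {c | ∃ D : Submodule F (Fin n → F), D ≤ C ∧ Module.finrank F D = s ∧
    c = Set.ncard {j | ∃ x ∈ D, x j ≠ 0}}

theorem mem_span_generators_iff (x : Fin 5 → ZMod 2) :
    x ∈ Submodule.span (ZMod 2)
      {![1, 0, 0, 1, 0], ![0, 1, 0, 1, 0], ![0, 0, 1, 0, 1]} ↔
      x 3 = x 0 + x 1 ∧ x 4 = x 2 := by
  rw [Submodule.mem_span_triple]
  constructor
  · rintro ⟨a, b, c, rfl⟩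
    simp
  · rintro ⟨h3, h4⟩
    refine ⟨x 0, x 1, x 2, ?_⟩
    ext i
    fin_cases i <;> simp [h3, h4]

theorem card_codewords_supported_le (S : Finset (Fin 5)) (hS : S.card < 3) :
    (Finset.univ.filter fun x : Fin 5 → ZMod 2 =>
      (x 3 = x 0 + x 1 ∧ x 4 = x 2) ∧ ∀ j, x j ≠ 0 → j ∈ S).card < 4 := by
  revert S
  decide +kernel

theorem finrank_span_first_two_generators :
    Module.finrank (ZMod 2) (Submodule.span (ZMod 2)
      ({![1, 0, 0, 1, 0], ![0, 1, 0, 1, 0]} : Set (Fin 5 → ZMod 2))) = 2 := by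
  have h : LinearIndependent (ZMod 2)
      ![(![1, 0, 0, 1, 0] : Fin 5 → ZMod 2), ![0, 1, 0, 1, 0]] := by
    rw [LinearIndependent.pair_iff]
    decide
  have := finrank_span_eq_card h
  rwa [Matrix.range_cons_cons_empty, Fintype.card_fin] at this

theorem support_span_first_two_generators :
    {j | ∃ x ∈ Submodule.span (ZMod 2)
      ({![1, 0, 0, 1, 0], ![0, 1, 0, 1, 0]} : Set (Fin 5 → ZMod 2)), x j ≠ 0} =
      (({0, 1, 3} : Finset (Fin 5)) : Set (Fin 5)) := by
  ext j
  simp only [Submodule.mem_span_pair, Set.mem_ofPred_eq, Finset.mem_coe]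
  constructor
  · rintro ⟨_, ⟨a, b, rfl⟩, h⟩
    revert h
    fin_cases j <;> simp
  · intro h
    have h' : ∀ j ∈ ({0, 1, 3} : Finset (Fin 5)), ∃ a b : ZMod 2,
        (a • ![1, 0, 0, 1, 0] + b • ![0, 1, 0, 1, 0] : Fin 5 → ZMod 2) j ≠ 0 := by
      decide
    obtain ⟨a, b, hab⟩ := h' j h
    exact ⟨_, ⟨a, b, rfl⟩, hab⟩

theorem two_le_card_of_infoSet (r : Fin 5 → Bool) (I : Finset (Fin 5))
    (hr : ∀ j ∈ I, r j = true)
    (hI : IsInfoSet (Submodule.span (ZMod 2)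
      {![1, 0, 0, 1, 0], ![0, 1, 0, 1, 0], ![0, 0, 1, 0, 1]}) 3 I) :
    2 ≤ (r 0).toNat + (r 1).toNat + (r 3).toNat := by
  have key : ∀ x : Fin 5 → ZMod 2, x ≠ 0 → (x 3 = x 0 + x 1 ∧ x 4 = x 2) →
      ∃ j, r j = true ∧ x j ≠ 0 := by
    intro x hx hC
    by_contra! h
    exact hx (hI.2 x ((mem_span_generators_iff x).2 hC) fun j hj => h j (hr j hj))
  have h₁ := key ![1, 1, 0, 0, 0] (by decide) (by decide)
  have h₂ := key ![1, 0, 0, 1, 0] (by decide) (by decide)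
  have h₃ := key ![0, 1, 0, 1, 0] (by decide) (by decide)
  simp only [Fin.exists_fin_succ] at h₁ h₂ h₃
  cases h0 : r 0 <;> cases h1 : r 1 <;> cases h3 : r 3 <;> simp_all

/-- the binary `[5,3,2]` code spanned by `(1,0,0,1,0)`, `(0,1,0,1,0)`,
`(0,0,1,0,1)` has `d_2 = 3 < (5/3)·2`, hence no PIR achievable rate matrix with
`κ/ν = 3/5` exists for it. -/
theorem example_n5k3_not_capacity_achieving :
    genHammingWeight
      (Submodule.span (ZMod 2)
        {![1, 0, 0, 1, 0], ![0, 1, 0, 1, 0], ![0, 0, 1, 0, 1]}) 2 = 3 ∧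
    (3 : ℚ) < (5 / 3) * 2 ∧
    ¬∃ (ν κ : ℕ) (Λ : Fin ν → Fin 5 → Bool), 0 < ν ∧
      IsPIRMatrix (Submodule.span (ZMod 2)
        {![1, 0, 0, 1, 0], ![0, 1, 0, 1, 0], ![0, 0, 1, 0, 1]}) 3 κ Λ ∧
      κ * 5 = 3 * ν := by
  refine ⟨le_antisymm ?_ ?_, by norm_num, ?_⟩
  · refine Nat.sInf_le ⟨_, Submodule.span_mono ?_, finrank_span_first_two_generators, ?_⟩
    · intro x hx
      simp only [Set.mem_insert_iff, Set.mem_singleton_iff] at hx ⊢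
      tauto
    · rw [support_span_first_two_generators, Set.ncard_coe_finset]
      rfl
  · refine le_csInf ⟨_, _, Submodule.span_mono ?_, finrank_span_first_two_generators, rfl⟩ ?_
    · intro x hx
      simp only [Set.mem_insert_iff, Set.mem_singleton_iff] at hx ⊢
      tauto
    · rintro c ⟨D, hD, hrank, rfl⟩
      by_contra! hlt
      classical
      rw [Set.ncard_eq_toFinset_card'] at hlt
      have hcard : Fintype.card D = 4 := by
        rw [Module.card_eq_pow_finrank (K := ZMod 2), hrank, ZMod.card]
        rfl
      have h := card_codewords_supported_le _ hlt
      refine absurd h (not_lt.2 ?_)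
      refine (hcard.symm.trans (Fintype.card_subtype _)).le.trans
        (Finset.card_le_card fun x hx => ?_)
      simp only [Finset.mem_filter, Finset.mem_univ, true_and, Set.mem_toFinset,
        Set.mem_ofPred_eq] at hx ⊢
      exact ⟨(mem_span_generators_iff x).1 (hD hx), fun j hj => ⟨x, hx, hj⟩⟩
  · rintro ⟨ν, κ, Λ, hν, ⟨hcol, hrow⟩, hκ⟩
    have hsum (j : Fin 5) : ∑ u, (Λ u j).toNat = κ := by
      rw [← hcol j, Finset.card_filter]
      exact Finset.sum_congr rfl fun u _ => by cases Λ u j <;> rfl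
    have hle : ∑ _u : Fin ν, 2 ≤
        ∑ u, ((Λ u 0).toNat + (Λ u 1).toNat + (Λ u 3).toNat) :=
      Finset.sum_le_sum fun u _ => by
        obtain ⟨I, hr, hI⟩ := hrow u
        exact two_le_card_of_infoSet (Λ u) I hr hI
    simp only [Finset.sum_add_distrib, hsum, Finset.sum_const, Finset.card_univ,
      Fintype.card_fin, smul_eq_mul] at hle
    omega
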